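/- If the energy distance E(P,Q) = 2E‖X-Y‖ - E‖X-X'‖ - E‖Y-Y'‖ is zero for probability measures P, Q on ℝ^d with finite first moments (with X,X' ~ P, Y,Y' ~ Q mutually independent), then P = Q. -/

import Mathlib

open MeasureTheory

/-- The energy distance `E(P,Q) = 2E‖X-Y‖ - E‖X-X'‖ - E‖Y-Y'‖` of two probability measures
on `ℝ^d`, with expectations over independent samples written as iterated integrals. -/
noncomputable def energyDist {d : ℕ} (P Q : Measure (EuclideanSpace ℝ (Fin d))) : ℝ :=
  2 * ∫ x, ∫ y, ‖x - y‖ ∂Q ∂P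
    - ∫ x, ∫ x', ‖x - x'‖ ∂P ∂P
    - ∫ y, ∫ y', ‖y - y'‖ ∂Q ∂Q

namespace EnergyAux

/-- The scalar kernel `(1 - exp (-u² r²)) / u²`. -/
noncomputable def ker (r u : ℝ) : ℝ := (1 - Real.exp (-(u ^ 2 * r ^ 2))) / u ^ 2

lemma ker_nonneg (r u : ℝ) : 0 ≤ ker r u := by
  unfold ker
  apply div_nonneg _ (sq_nonneg u)
  have : Real.exp (-(u ^ 2 * r ^ 2)) ≤ 1 := Real.exp_le_one_iff.2 (by nlinarith [sq_nonneg (u * r)])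
  linarith

lemma measurable_ker : Measurable (fun p : ℝ × ℝ => ker p.1 p.2) := by
  unfold ker
  fun_prop

lemma ker_one_le (u : ℝ) : ker 1 u ≤ 2 * (1 + u ^ 2)⁻¹ := by
  unfold ker
  rcases eq_or_ne u 0 with rfl | hu
  · simp
  have hu2 : 0 < u ^ 2 := by positivity
  rw [div_le_iff₀ hu2, ← div_eq_mul_inv, div_mul_eq_mul_div, le_div_iff₀ (by positivity)]
  have h1 := Real.add_one_le_exp (-(u ^ 2 * 1 ^ 2))
  have h2 := Real.exp_pos (-(u ^ 2 * 1 ^ 2))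
  nlinarith

lemma integrable_ker_one : Integrable (fun u => ker 1 u) := by
  refine Integrable.mono' (integrable_inv_one_add_sq.const_mul 2) ?_ ?_
  · exact (measurable_ker.comp (by fun_prop : Measurable (fun u : ℝ => ((1 : ℝ), u)))).aestronglyMeasurable
  · refine Filter.Eventually.of_forall fun u => ?_
    rw [Real.norm_of_nonneg (ker_nonneg _ _)]
    exact ker_one_le u

lemma ker_scale {r : ℝ} (hr : r ≠ 0) (u : ℝ) : ker r u = r ^ 2 * ker 1 (r * u) := by
  unfold ker
  rcases eq_or_ne u 0 with rfl | hu
  · simp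
  field_simp

lemma integrable_ker (r : ℝ) : Integrable (fun u => ker r u) := by
  rcases eq_or_ne r 0 with rfl | hr
  · simp [ker]
  simp_rw [ker_scale hr]
  exact ((integrable_ker_one.comp_mul_left' hr)).const_mul _

lemma integral_ker {r : ℝ} (hr : 0 ≤ r) : ∫ u, ker r u = r * ∫ u, ker 1 u := by
  rcases eq_or_ne r 0 with rfl | hr0
  · simp [ker]
  simp_rw [ker_scale hr0]
  rw [integral_const_mul, Measure.integral_comp_mul_left (fun u => ker 1 u), abs_of_nonneg (inv_nonneg.2 hr),
    smul_eq_mul]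
  field_simp

variable {d : ℕ}

lemma int_comb {Ω : Type*} [MeasurableSpace Ω] {m : Measure Ω} {f g k : Ω → ℝ}
    (hf : Integrable f m) (hg : Integrable g m) (hk : Integrable k m) :
    Integrable (fun t => 2 * f t - g t - k t) m ∧
    ∫ t, (2 * f t - g t - k t) ∂m = 2 * (∫ t, f t ∂m) - (∫ t, g t ∂m) - ∫ t, k t ∂m := by
  have h1 : Integrable (fun t => 2 * f t) m := hf.const_mul 2
  have h2 : Integrable (fun t => 2 * f t - g t) m := h1.sub hg
  refine ⟨h2.sub hk, ?_⟩
  rw [integral_sub h2 hk, integral_sub h1 hg, integral_const_mul]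

lemma fubini_gen {Ω : Type*} [MeasurableSpace Ω] (m : Measure Ω) [IsProbabilityMeasure m]
    (r : Ω → ℝ) (hr : ∀ x, 0 ≤ r x) (hm : Measurable r) (hi : Integrable r m) :
    Integrable (fun u : ℝ => ∫ p, ker (r p) u ∂m) ∧
    ∫ u : ℝ, ∫ p, ker (r p) u ∂m = (∫ p, r p ∂m) * ∫ u, ker 1 u := by
  have hmeas : Measurable (Function.uncurry fun (p : Ω) (u : ℝ) => ker (r p) u) := by
    unfold Function.uncurry ker
    fun_prop
  have hI : Integrable (Function.uncurry fun (p : Ω) (u : ℝ) => ker (r p) u)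
      (m.prod volume) := by
    refine (integrable_prod_iff hmeas.aestronglyMeasurable).2
      ⟨Filter.Eventually.of_forall fun p => integrable_ker (r p), ?_⟩
    have : (fun x => ∫ y : ℝ, ‖Function.uncurry (fun (p : Ω) (u : ℝ) => ker (r p) u) (x, y)‖)
        = fun x => r x * ∫ u, ker 1 u := by
      ext x
      rw [← integral_ker (hr x)]
      refine integral_congr_ae (Filter.Eventually.of_forall fun u => ?_)
      exact Real.norm_of_nonneg (ker_nonneg _ _)
    rw [this]
    exact hi.mul_const _
  refine ⟨hI.integral_prod_right, ?_⟩
  rw [← integral_integral_swap hI, ← integral_mul_const]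
  exact integral_congr_ae (Filter.Eventually.of_forall fun p => integral_ker (hr p))

lemma fubini_ker (μ ν : Measure (EuclideanSpace ℝ (Fin d)))
    [IsProbabilityMeasure μ] [IsProbabilityMeasure ν]
    (hμ : Integrable (fun x => ‖x‖) μ) (hν : Integrable (fun y => ‖y‖) ν) :
    Integrable (fun u : ℝ => ∫ p, ker ‖p.1 - p.2‖ u ∂(μ.prod ν)) ∧
    ∫ u : ℝ, ∫ p, ker ‖p.1 - p.2‖ u ∂(μ.prod ν)
      = (∫ x, ∫ y, ‖x - y‖ ∂ν ∂μ) * ∫ u, ker 1 u := by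
  have hc : Continuous (fun p : EuclideanSpace ℝ (Fin d) × EuclideanSpace ℝ (Fin d) =>
      ‖p.1 - p.2‖) := by fun_prop
  have hn : Integrable (fun p : EuclideanSpace ℝ (Fin d) × EuclideanSpace ℝ (Fin d) =>
      ‖p.1 - p.2‖) (μ.prod ν) := by
    refine Integrable.mono' ((hμ.comp_fst ν).add (hν.comp_snd μ)) hc.aestronglyMeasurable ?_
    refine Filter.Eventually.of_forall fun p => ?_
    rw [norm_norm]
    exact norm_sub_le _ _
  have h := fubini_gen (μ.prod ν) (fun p => ‖p.1 - p.2‖) (fun p => norm_nonneg _) hc.measurable hn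
  rw [integral_prod _ hn] at h
  exact h

lemma gauss_fourier {b : ℝ} (hb : 0 < b) (z : EuclideanSpace ℝ (Fin d)) :
    ∫ t : EuclideanSpace ℝ (Fin d), (Real.exp (-b * ‖t‖ ^ 2) : ℂ) *
        Complex.exp ((inner ℝ z t : ℝ) * Complex.I)
      = (((Real.pi / b) ^ ((d : ℝ) / 2) * Real.exp (-(‖z‖ ^ 2 / (4 * b))) : ℝ) : ℂ) := by
  have h := GaussianFourier.integral_cexp_neg_mul_sq_norm_add
    (b := (b : ℂ)) (by simpa using hb) Complex.I z
  rw [finrank_euclideanSpace_fin] at h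
  push_cast
  rw [Complex.ofReal_cpow (by positivity)]
  push_cast
  convert h using 2
  · ext t
    rw [← Complex.exp_add]
    ring_nf
  · rw [Complex.I_sq]; ring_nf

lemma integrable_gauss {b : ℝ} (hb : 0 < b) :
    Integrable (fun t : EuclideanSpace ℝ (Fin d) => Real.exp (-b * ‖t‖ ^ 2)) := by
  have h := GaussianFourier.integrable_cexp_neg_mul_sq_norm_add
    (b := (b : ℂ)) (by simpa using hb) 0 (0 : EuclideanSpace ℝ (Fin d))
  refine h.norm.congr (Filter.Eventually.of_forall fun t => ?_)
  simp only [Complex.norm_exp]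
  congr 1
  norm_cast
  simp

lemma gauss_kernel {b : ℝ} (hb : 0 < b) (μ ν : Measure (EuclideanSpace ℝ (Fin d)))
    [IsProbabilityMeasure μ] [IsProbabilityMeasure ν] :
    (Real.pi / b) ^ ((d : ℝ) / 2) * ∫ p, Real.exp (-(‖p.1 - p.2‖ ^ 2 / (4 * b))) ∂(μ.prod ν)
     = ∫ t : EuclideanSpace ℝ (Fin d), Real.exp (-b * ‖t‖ ^ 2) *
        (charFun μ t * (starRingEnd ℂ) (charFun ν t)).re := by
  have hcont : Continuous (fun q : (EuclideanSpace ℝ (Fin d) × EuclideanSpace ℝ (Fin d)) ×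
      EuclideanSpace ℝ (Fin d) => (Real.exp (-b * ‖q.2‖ ^ 2) : ℂ) *
        Complex.exp ((inner ℝ (q.1.1 - q.1.2) q.2 : ℝ) * Complex.I)) := by fun_prop
  have hI : Integrable (Function.uncurry
      fun (p : EuclideanSpace ℝ (Fin d) × EuclideanSpace ℝ (Fin d))
        (t : EuclideanSpace ℝ (Fin d)) => (Real.exp (-b * ‖t‖ ^ 2) : ℂ) *
        Complex.exp ((inner ℝ (p.1 - p.2) t : ℝ) * Complex.I)) ((μ.prod ν).prod volume) := by
    refine Integrable.mono' ((integrable_gauss hb).comp_snd (μ.prod ν))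
      hcont.aestronglyMeasurable (Filter.Eventually.of_forall fun q => ?_)
    simp only [Function.uncurry]
    rw [norm_mul, Complex.norm_exp_ofReal_mul_I, mul_one, Complex.norm_real,
      Real.norm_of_nonneg (Real.exp_pos _).le]
  have hs := integral_integral_swap hI
  simp_rw [gauss_fourier hb] at hs
  rw [integral_complex_ofReal, integral_const_mul] at hs
  have hin : ∀ t : EuclideanSpace ℝ (Fin d),
      ∫ p, (Real.exp (-b * ‖t‖ ^ 2) : ℂ) *
        Complex.exp ((inner ℝ (p.1 - p.2) t : ℝ) * Complex.I) ∂(μ.prod ν)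
      = (Real.exp (-b * ‖t‖ ^ 2) : ℂ) * (charFun μ t * (starRingEnd ℂ) (charFun ν t)) := by
    intro t
    rw [integral_const_mul, ← charFun_neg, charFun_apply, charFun_apply, ← integral_prod_mul]
    congr 2
    ext p
    rw [← Complex.exp_add, inner_sub_left, inner_neg_right]
    push_cast
    ring_nf
  simp_rw [hin] at hs
  have hI2 := hI.integral_prod_right
  simp only [Function.uncurry, hin] at hI2
  have h3 := congrArg Complex.re hs
  rw [Complex.ofReal_re] at h3
  rw [h3]
  have h4 := integral_re hI2
  simp only [RCLike.re_to_complex] at h4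
  rw [← h4]
  simp only [Complex.re_ofReal_mul]

lemma gauss_diff {b : ℝ} (hb : 0 < b) (P Q : Measure (EuclideanSpace ℝ (Fin d)))
    [IsProbabilityMeasure P] [IsProbabilityMeasure Q] :
    Integrable (fun t : EuclideanSpace ℝ (Fin d) => Real.exp (-b * ‖t‖ ^ 2) *
        Complex.normSq (charFun P t - charFun Q t)) ∧
    (Real.pi / b) ^ ((d : ℝ) / 2) *
      ((∫ p, Real.exp (-(‖p.1 - p.2‖ ^ 2 / (4 * b))) ∂(P.prod P))
       + (∫ p, Real.exp (-(‖p.1 - p.2‖ ^ 2 / (4 * b))) ∂(Q.prod Q))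
       - 2 * ∫ p, Real.exp (-(‖p.1 - p.2‖ ^ 2 / (4 * b))) ∂(P.prod Q))
     = ∫ t : EuclideanSpace ℝ (Fin d), Real.exp (-b * ‖t‖ ^ 2) *
        Complex.normSq (charFun P t - charFun Q t) := by
  have key : ∀ (μ ν : Measure (EuclideanSpace ℝ (Fin d)))
      [IsProbabilityMeasure μ] [IsProbabilityMeasure ν],
      Integrable (fun t : EuclideanSpace ℝ (Fin d) => Real.exp (-b * ‖t‖ ^ 2) *
        (charFun μ t * (starRingEnd ℂ) (charFun ν t)).re) := by
    intro μ ν _ _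
    refine Integrable.mono' (integrable_gauss hb) ?_ (Filter.Eventually.of_forall fun t => ?_)
    · have h1 : Continuous (charFun μ) := continuous_charFun
      have h2 : Continuous (charFun ν) := continuous_charFun
      have h3 : Continuous (fun t => (starRingEnd ℂ) (charFun ν t)) :=
        Complex.continuous_conj.comp h2
      have h4 := Complex.continuous_re.comp (h1.mul h3)
      exact (Continuous.mul (by fun_prop) h4).aestronglyMeasurable
    · rw [norm_mul, Real.norm_of_nonneg (Real.exp_pos _).le]
      refine mul_le_of_le_one_right (Real.exp_pos _).le ?_
      refine (Complex.abs_re_le_norm _).trans ?_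
      rw [norm_mul, RCLike.norm_conj]
      exact mul_le_one₀ (norm_charFun_le_one t) (norm_nonneg _) (norm_charFun_le_one t)
  have hfun : (fun t : EuclideanSpace ℝ (Fin d) => Real.exp (-b * ‖t‖ ^ 2) *
        Complex.normSq (charFun P t - charFun Q t)) = fun t =>
      -(2 * (Real.exp (-b * ‖t‖ ^ 2) * (charFun P t * (starRingEnd ℂ) (charFun Q t)).re)
      - Real.exp (-b * ‖t‖ ^ 2) * (charFun P t * (starRingEnd ℂ) (charFun P t)).re
      - Real.exp (-b * ‖t‖ ^ 2) * (charFun Q t * (starRingEnd ℂ) (charFun Q t)).re) := by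
    ext t
    rw [Complex.normSq_sub, Complex.mul_conj, Complex.mul_conj, Complex.ofReal_re,
      Complex.ofReal_re]
    ring
  obtain ⟨j1, j2⟩ := int_comb (key P Q) (key P P) (key Q Q)
  rw [hfun]
  refine ⟨j1.neg, ?_⟩
  rw [integral_neg, j2, ← gauss_kernel hb, ← gauss_kernel hb, ← gauss_kernel hb]
  ring

lemma integral_ker_eq {u : ℝ} (hu : u ≠ 0) (μ ν : Measure (EuclideanSpace ℝ (Fin d)))
    [IsProbabilityMeasure μ] [IsProbabilityMeasure ν] :
    ∫ p, ker ‖p.1 - p.2‖ u ∂(μ.prod ν) =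
      (1 - ∫ p, Real.exp (-(‖p.1 - p.2‖ ^ 2 / (4 * (1 / (4 * u ^ 2))))) ∂(μ.prod ν)) / u ^ 2 := by
  have hi : Integrable (fun p : EuclideanSpace ℝ (Fin d) × EuclideanSpace ℝ (Fin d) =>
      Real.exp (-(u ^ 2 * ‖p.1 - p.2‖ ^ 2))) (μ.prod ν) := by
    refine Integrable.mono' (integrable_const (1 : ℝ)) ?_ (Filter.Eventually.of_forall fun p => ?_)
    · exact (by fun_prop : Continuous _).aestronglyMeasurable
    · rw [Real.norm_of_nonneg (Real.exp_pos _).le, Real.exp_le_one_iff]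
      have : 0 ≤ u ^ 2 * ‖p.1 - p.2‖ ^ 2 := by positivity
      linarith
  have he : ∀ r : ℝ, r ^ 2 / (4 * (1 / (4 * u ^ 2))) = u ^ 2 * r ^ 2 := by
    intro r; field_simp
  simp_rw [he]
  unfold ker
  rw [integral_div, integral_sub (integrable_const _) hi]
  simp

end EnergyAux

open EnergyAux in
/-- Identifiability: if the energy distance between two probability measures on ℝ^d with
finite first moments is zero, then the measures coincide. -/
theorem energyDist_eq_zero_imp_eq {d : ℕ} (P Q : Measure (EuclideanSpace ℝ (Fin d)))
    [IsProbabilityMeasure P] [IsProbabilityMeasure Q]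
    (hP : Integrable (fun x => ‖x‖) P) (hQ : Integrable (fun y => ‖y‖) Q)
    (h : energyDist P Q = 0) :
    P = Q := by
  obtain ⟨i1, e1⟩ := fubini_ker P Q hP hQ
  obtain ⟨i2, e2⟩ := fubini_ker P P hP hP
  obtain ⟨i3, e3⟩ := fubini_ker Q Q hQ hQ
  have hD : ∀ u : ℝ, u ≠ 0 → 2 * (∫ p, ker ‖p.1 - p.2‖ u ∂(P.prod Q))
      - (∫ p, ker ‖p.1 - p.2‖ u ∂(P.prod P)) - (∫ p, ker ‖p.1 - p.2‖ u ∂(Q.prod Q))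
      = (∫ t : EuclideanSpace ℝ (Fin d), Real.exp (-(1 / (4 * u ^ 2)) * ‖t‖ ^ 2) *
        Complex.normSq (charFun P t - charFun Q t)) /
        (u ^ 2 * (Real.pi / (1 / (4 * u ^ 2))) ^ ((d : ℝ) / 2)) := by
    intro u hu
    have hb : 0 < 1 / (4 * u ^ 2) := by positivity
    have hc : 0 < (Real.pi / (1 / (4 * u ^ 2))) ^ ((d : ℝ) / 2) := by
      apply Real.rpow_pos_of_pos; exact div_pos Real.pi_pos hb
    rw [← (gauss_diff hb P Q).2, integral_ker_eq hu, integral_ker_eq hu, integral_ker_eq hu,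
      mul_comm (u ^ 2), mul_div_mul_left _ _ hc.ne']
    ring
  have hnn : ∀ u : ℝ, 0 ≤ ∫ t : EuclideanSpace ℝ (Fin d),
      Real.exp (-(1 / (4 * u ^ 2)) * ‖t‖ ^ 2) * Complex.normSq (charFun P t - charFun Q t) :=
    fun u => integral_nonneg fun t => mul_nonneg (Real.exp_pos _).le (Complex.normSq_nonneg _)
  have hint : ∫ u : ℝ, (2 * (∫ p, ker ‖p.1 - p.2‖ u ∂(P.prod Q))
      - (∫ p, ker ‖p.1 - p.2‖ u ∂(P.prod P)) - (∫ p, ker ‖p.1 - p.2‖ u ∂(Q.prod Q))) = 0 := by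
    rw [(int_comb i1 i2 i3).2, e1, e2, e3]
    unfold energyDist at h
    linear_combination (∫ u, ker 1 u) * h
  rw [integral_eq_zero_iff_of_nonneg _ (int_comb i1 i2 i3).1] at hint
  swap
  · intro u
    rcases eq_or_ne u 0 with rfl | hu
    · simp [ker]
    · simp only [Pi.zero_apply]
      rw [hD u hu]
      exact div_nonneg (hnn u) (by positivity)
  have hne : ∀ᵐ u : ℝ, u ≠ 0 := by
    simp [ae_iff]
  obtain ⟨u, h0, hu⟩ := (hint.and hne).exists
  simp only [Pi.zero_apply] at h0
  rw [hD u hu, div_eq_zero_iff, or_iff_left (by positivity)] at h0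
  have hb : 0 < 1 / (4 * u ^ 2) := by positivity
  rw [integral_eq_zero_iff_of_nonneg
    (fun t => mul_nonneg (Real.exp_pos _).le (Complex.normSq_nonneg _))
    (gauss_diff hb P Q).1] at h0
  have hcP : Continuous (charFun P) := continuous_charFun
  have hcQ : Continuous (charFun Q) := continuous_charFun
  apply Measure.ext_of_charFun
  rw [← Continuous.ae_eq_iff_eq volume hcP hcQ]
  filter_upwards [h0] with t ht
  simpa [(Real.exp_pos _).ne', sub_eq_zero] using ht
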